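/- Let 1 ≤ p < n, let r be an integer with p ≤ r < n such that |λ_p|/2 ≤ λ_p − λ_{r+1}, set x := max_{1≤i,j≤r} |u_iᵀ E u_j|, and assume 0 < 4‖E‖ ≤ δ_p := λ_p − λ_{p+1} ≤ |λ_p|/4. Then F₁ ≤ 12 ( (‖E‖/|λ_p|)·log(6σ₁/δ_p) + r²x/δ_p ). -/

import Mathlib

open Matrix

/-- The spectral norm (ℓ²→ℓ² operator norm) of a matrix. -/
noncomputable def specNorm {𝕜 : Type*} [RCLike 𝕜] {m n : ℕ}
    (M : Matrix (Fin m) (Fin n) 𝕜) : ℝ :=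
  ‖LinearMap.toContinuousLinearMap (Matrix.toEuclideanLin M)‖

/-- The resolvent `(zI − A)⁻¹` of a real matrix `A`, regarded as a complex matrix. -/
noncomputable def res {n : ℕ} (A : Matrix (Fin n) (Fin n) ℝ) (z : ℂ) :
    Matrix (Fin n) (Fin n) ℂ :=
  (z • (1 : Matrix (Fin n) (Fin n) ℂ) - A.map Complex.ofReal)⁻¹

section helpers
open scoped Matrix.Norms.L2Operator

lemma specNorm_eq {𝕜 : Type*} [RCLike 𝕜] {m n : ℕ} (M : Matrix (Fin m) (Fin n) 𝕜) :
    specNorm M = ‖M‖ := rfl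

lemma norm_specNorm {𝕜 : Type*} [RCLike 𝕜] {m n : ℕ} (M : Matrix (Fin m) (Fin n) 𝕜) :
    ‖specNorm M‖ = specNorm M :=
  Real.norm_of_nonneg (norm_nonneg M)

lemma norm_le_sum_coord {n : ℕ} (v : EuclideanSpace ℂ (Fin n)) : ‖v‖ ≤ ∑ i, ‖v i‖ := by
  have h : v = ∑ i, EuclideanSpace.single i (v i) := by
    ext j
    simp [Finset.sum_apply, Pi.single_apply]
  calc ‖v‖ = ‖∑ i, EuclideanSpace.single i (v i)‖ := by rw [← h]
    _ ≤ ∑ i, ‖EuclideanSpace.single i (v i)‖ := norm_sum_le _ _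
    _ = _ := by simp

lemma norm_le_sum_entries {n : ℕ} (M : Matrix (Fin n) (Fin n) ℂ) :
    ‖M‖ ≤ ∑ i, ∑ j, ‖M i j‖ := by
  rw [← specNorm_eq, specNorm]
  refine ContinuousLinearMap.opNorm_le_bound _ (by positivity) fun v => ?_
  refine (norm_le_sum_coord _).trans ?_
  rw [Finset.sum_mul]
  refine Finset.sum_le_sum fun i _ => ?_
  rw [Finset.sum_mul]
  have : (LinearMap.toContinuousLinearMap (Matrix.toEuclideanLin M) v) i = ∑ j, M i j * v j := by
    simp [Matrix.toEuclideanLin, Matrix.mulVec, dotProduct]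
  rw [this]
  refine (norm_sum_le _ _).trans (Finset.sum_le_sum fun j _ => ?_)
  rw [norm_mul]
  gcongr
  exact PiLp.norm_apply_le v j

lemma norm_mulVec_sq_le {n : ℕ} (E : Matrix (Fin n) (Fin n) ℝ) (w : Fin n → ℝ) :
    ∑ i, (E *ᵥ w) i ^ 2 ≤ ‖E‖ ^ 2 * ∑ i, w i ^ 2 := by
  have h := Matrix.l2_opNorm_mulVec E (WithLp.toLp 2 w)
  have h2 := pow_le_pow_left₀ (norm_nonneg _) h 2
  rw [mul_pow, EuclideanSpace.norm_sq_eq, EuclideanSpace.norm_sq_eq] at h2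
  simpa using h2

lemma norm_map_ofReal_le {n : ℕ} (E : Matrix (Fin n) (Fin n) ℝ) :
    ‖E.map Complex.ofReal‖ ≤ ‖E‖ := by
  rw [← specNorm_eq, specNorm]
  refine ContinuousLinearMap.opNorm_le_bound _ (norm_nonneg _) fun v => ?_
  refine (sq_le_sq₀ (by positivity) (by positivity)).mp ?_
  rw [mul_pow, EuclideanSpace.norm_sq_eq, EuclideanSpace.norm_sq_eq]
  have h1 := norm_mulVec_sq_le E (fun i => (v i).re)
  have h2 := norm_mulVec_sq_le E (fun i => (v i).im)
  have key : ∀ z : ℂ, ‖z‖ ^ 2 = z.re ^ 2 + z.im ^ 2 := fun z => by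
    rw [← Complex.normSq_eq_norm_sq, Complex.normSq_apply]; ring
  have e1 : ∀ i, (LinearMap.toContinuousLinearMap
      (Matrix.toEuclideanLin (E.map Complex.ofReal)) v) i = ∑ j, (E i j : ℂ) * v j := by
    intro i
    simp [Matrix.toEuclideanLin, Matrix.mulVec, dotProduct]
  simp only [e1, key, Finset.sum_add_distrib, mul_add]
  refine le_trans (le_of_eq ?_) (add_le_add h1 h2)
  simp [Matrix.mulVec, dotProduct]

lemma norm_le_one_of_unitary {n : ℕ} (V : Matrix (Fin n) (Fin n) ℂ) (h : Vᴴ * V = 1) :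
    ‖V‖ ≤ 1 := by
  have h1 := Matrix.l2_opNorm_conjTranspose_mul_self V
  have h2 : ‖(1 : Matrix (Fin n) (Fin n) ℂ)‖ ≤ 1 := by
    rw [← Matrix.diagonal_one, Matrix.l2_opNorm_diagonal]
    exact (pi_norm_le_iff_of_nonneg zero_le_one).2 (by simp)
  rw [h] at h1
  nlinarith [norm_nonneg V]

lemma norm_diag_le {n : ℕ} (d : Fin n → ℂ) (c : ℝ) (hc : 0 ≤ c) (h : ∀ i, ‖d i‖ ≤ c) :
    ‖(Matrix.diagonal d : Matrix (Fin n) (Fin n) ℂ)‖ ≤ c := by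
  rw [Matrix.l2_opNorm_diagonal]
  exact (pi_norm_le_iff_of_nonneg hc).2 h

lemma norm_mul3_le {n : ℕ} (X Y Z : Matrix (Fin n) (Fin n) ℂ) {a b c : ℝ} (hX : ‖X‖ ≤ a)
    (hY : ‖Y‖ ≤ b) (hZ : ‖Z‖ ≤ c) : ‖X * Y * Z‖ ≤ a * b * c := by
  have ha := (norm_nonneg X).trans hX
  have hb := (norm_nonneg Y).trans hY
  refine (Matrix.l2_opNorm_mul _ _).trans ?_
  gcongr
  refine (Matrix.l2_opNorm_mul _ _).trans ?_
  gcongr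

/-- Norm bound for `D G D` with `D` diagonal. -/
lemma norm_DGD_le {n : ℕ} (G : Matrix (Fin n) (Fin n) ℂ) (d : Fin n → ℂ) (r : ℕ)
    (x e α β : ℝ) (hx : 0 ≤ x) (hα : 0 ≤ α) (hβ : 0 ≤ β)
    (hG : ‖G‖ ≤ e) (hGx : ∀ i j : Fin n, (i : ℕ) < r → (j : ℕ) < r → ‖G i j‖ ≤ x)
    (hd : ∀ i, ‖d i‖ ≤ α) (hd2 : ∀ i : Fin n, r ≤ (i : ℕ) → ‖d i‖ ≤ β) :
    ‖Matrix.diagonal d * G * Matrix.diagonal d‖ ≤ (r : ℝ) ^ 2 * x * α ^ 2 + 2 * e * α * β := by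
  set d1 : Fin n → ℂ := fun i => if (i : ℕ) < r then d i else 0 with hd1
  set d2 : Fin n → ℂ := fun i => if (i : ℕ) < r then 0 else d i with hd2'
  have hsplit : (Matrix.diagonal d : Matrix (Fin n) (Fin n) ℂ)
      = Matrix.diagonal d1 + Matrix.diagonal d2 := by
    rw [Matrix.diagonal_add]
    congr 1
    ext i
    by_cases h : (i : ℕ) < r <;> simp [hd1, hd2', h]
  have n1 : ‖(Matrix.diagonal d1 : Matrix (Fin n) (Fin n) ℂ)‖ ≤ α := by
    refine norm_diag_le _ _ hα fun i => ?_
    by_cases h : (i : ℕ) < r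
    · simpa [hd1, h] using hd i
    · simpa [hd1, h] using hα
  have n2 : ‖(Matrix.diagonal d2 : Matrix (Fin n) (Fin n) ℂ)‖ ≤ β := by
    refine norm_diag_le _ _ hβ fun i => ?_
    by_cases h : (i : ℕ) < r
    · simpa [hd2', h] using hβ
    · simpa [hd2', h] using hd2 i (not_lt.1 h)
  have n3 := norm_diag_le d α hα hd
  have eq : Matrix.diagonal d * G * Matrix.diagonal d
      = Matrix.diagonal d1 * G * Matrix.diagonal d1
        + (Matrix.diagonal d1 * G * Matrix.diagonal d2
        + Matrix.diagonal d2 * G * Matrix.diagonal d) := by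
    rw [hsplit]; noncomm_ring
  rw [eq]
  have b2 := norm_mul3_le _ _ _ n1 hG n2
  have b3 := norm_mul3_le _ _ _ n2 hG n3
  have b1 : ‖Matrix.diagonal d1 * G * Matrix.diagonal d1‖ ≤ (r : ℝ) ^ 2 * x * α ^ 2 := by
    refine (norm_le_sum_entries _).trans ?_
    set f : Fin n → ℝ := fun i => if (i : ℕ) < r then 1 else 0 with hf
    have hb : ∀ i j, ‖(Matrix.diagonal d1 * G * Matrix.diagonal d1) i j‖
        ≤ f i * f j * (x * α ^ 2) := by
      intro i j
      rw [Matrix.mul_diagonal, Matrix.diagonal_mul, norm_mul, norm_mul]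
      by_cases hi : (i : ℕ) < r
      · by_cases hj : (j : ℕ) < r
        · simp only [hd1, hf, hi, hj, if_true]
          have := hGx i j hi hj
          calc ‖d i‖ * ‖G i j‖ * ‖d j‖ ≤ α * x * α := by
                gcongr
                · exact hd i
                · exact hd j
            _ = _ := by ring
        · simp [hd1, hf, hj]
      · simp [hd1, hf, hi]
    have hs : ∑ i, f i ≤ r := by
      simp only [hf, Finset.sum_boole]
      norm_cast
      have : (Finset.univ.filter fun i : Fin n => (i : ℕ) < r).card ≤ (Finset.range r).card := by
        refine Finset.card_le_card_of_injOn (fun i => (i : ℕ)) ?_ ?_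
        · intro i hi; simpa using hi
        · intro i _ j _ h; exact Fin.ext h
      simpa using this
    have hs0 : 0 ≤ ∑ i, f i := Finset.sum_nonneg fun i _ => by
      simp only [hf]; split_ifs <;> norm_num
    calc ∑ i, ∑ j, ‖(Matrix.diagonal d1 * G * Matrix.diagonal d1) i j‖
        ≤ ∑ i, ∑ j, f i * f j * (x * α ^ 2) :=
          Finset.sum_le_sum fun i _ => Finset.sum_le_sum fun j _ => hb i j
      _ = (∑ i, f i) * (∑ j, f j) * (x * α ^ 2) := by
          rw [Finset.sum_mul_sum, Finset.sum_mul]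
          refine Finset.sum_congr rfl fun i _ => ?_
          rw [Finset.sum_mul]
      _ ≤ (r : ℝ) * r * (x * α ^ 2) := by gcongr
      _ = _ := by ring
  have t1 := norm_add_le (Matrix.diagonal d1 * G * Matrix.diagonal d1)
    (Matrix.diagonal d1 * G * Matrix.diagonal d2 + Matrix.diagonal d2 * G * Matrix.diagonal d)
  have t2 := norm_add_le (Matrix.diagonal d1 * G * Matrix.diagonal d2)
    (Matrix.diagonal d2 * G * Matrix.diagonal d)
  nlinarith

/-- Diagonalisation of the resolvent. -/
lemma res_facts {n : ℕ} (A E : Matrix (Fin n) (Fin n) ℝ) (l : Fin n → ℝ)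
    (w : Fin n → Fin n → ℝ) (hon : ∀ i j, w i ⬝ᵥ w j = if i = j then 1 else 0)
    (heig : ∀ i, A *ᵥ w i = l i • w i) :
    ∃ G : Matrix (Fin n) (Fin n) ℂ, ‖G‖ ≤ ‖E‖ ∧ (∀ i j, ‖G i j‖ = |w i ⬝ᵥ E *ᵥ w j|) ∧
      ∀ z : ℂ, (∀ i, z - l i ≠ 0) →
        ‖res A z * E.map Complex.ofReal * res A z‖
          ≤ ‖Matrix.diagonal (fun i => (z - l i)⁻¹) * G
            * Matrix.diagonal (fun i => (z - l i)⁻¹)‖ := by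
  set U : Matrix (Fin n) (Fin n) ℝ := Matrix.of fun i j => w j i with hU
  have hUU : Uᵀ * U = 1 := by
    ext i j
    rw [Matrix.mul_apply, Matrix.one_apply, ← hon i j]
    simp [hU, dotProduct]
  have hAU : A * U = U * Matrix.diagonal l := by
    ext i j
    have := congrFun (heig j) i
    rw [Matrix.mul_diagonal, Matrix.mul_apply]
    simp only [Matrix.mulVec, dotProduct, Pi.smul_apply, smul_eq_mul] at this
    simp only [hU, Matrix.of_apply]
    rw [this, mul_comm]
  set φ : ℝ →+* ℂ := Complex.ofRealHom with hφ
  set V : Matrix (Fin n) (Fin n) ℂ := U.map φ with hV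
  have hVt : Vᴴ = Uᵀ.map φ := by
    ext i j; simp [hV, Matrix.conjTranspose_apply, hφ]
  have hVV : Vᴴ * V = 1 := by
    rw [hVt, hV, ← Matrix.map_mul, hUU]; simp
  have hVV' : V * Vᴴ = 1 := mul_eq_one_comm.1 hVV
  have hAV : A.map φ * V = V * Matrix.diagonal (fun i => (l i : ℂ)) := by
    rw [hV, ← Matrix.map_mul, hAU, Matrix.map_mul, Matrix.diagonal_map (by simp)]
    rfl
  have nV := norm_le_one_of_unitary V hVV
  have nV' : ‖Vᴴ‖ ≤ 1 := by rwa [Matrix.l2_opNorm_conjTranspose]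
  refine ⟨Vᴴ * E.map φ * V, ?_, ?_, ?_⟩
  · have := norm_mul3_le _ _ _ nV' (norm_map_ofReal_le E) nV
    rw [one_mul, mul_one] at this
    exact this
  · intro i j
    rw [hVt, hV, ← Matrix.map_mul, ← Matrix.map_mul, Matrix.map_apply]
    have : (Uᵀ * E * U) i j = w i ⬝ᵥ E *ᵥ w j := by
      rw [Matrix.mul_assoc, Matrix.mul_apply]
      simp [hU, dotProduct, Matrix.mulVec, Matrix.mul_apply]
    rw [this]
    simp [hφ]
  · intro z hz
    set d : Fin n → ℂ := fun i => (z - l i)⁻¹ with hd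
    have hres : res A z = V * Matrix.diagonal d * Vᴴ := by
      refine Matrix.inv_eq_right_inv ?_
      have h1 : (z • (1 : Matrix (Fin n) (Fin n) ℂ) - A.map Complex.ofReal) * V
          = V * Matrix.diagonal (fun i => z - l i) := by
        have : A.map Complex.ofReal * V = V * Matrix.diagonal (fun i => (l i : ℂ)) := hAV
        rw [Matrix.sub_mul, this, ← Matrix.diagonal_sub, Matrix.mul_sub]
        congr 1
        ext i j
        simp [Matrix.mul_diagonal, mul_comm]
      rw [← Matrix.mul_assoc, ← Matrix.mul_assoc, h1, Matrix.mul_assoc V,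
        Matrix.diagonal_mul_diagonal]
      have : (fun i => (z - l i) * d i) = fun _ => (1 : ℂ) := by
        ext i; simp [hd, hz i]
      rw [this, Matrix.diagonal_one, Matrix.mul_one, hVV']
    have heq : res A z * E.map Complex.ofReal * res A z
        = V * (Matrix.diagonal d * (Vᴴ * E.map φ * V) * Matrix.diagonal d) * Vᴴ := by
      rw [hres]
      simp only [Matrix.mul_assoc]
      rfl
    rw [heq]
    have := norm_mul3_le _ _ _ nV (le_refl
      ‖Matrix.diagonal d * (Vᴴ * E.map φ * V) * Matrix.diagonal d‖) nV'
    simpa using this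

lemma abs_eig_le {n : ℕ} (A : Matrix (Fin n) (Fin n) ℝ) (l : ℝ) (w : Fin n → ℝ)
    (hw : w ⬝ᵥ w = 1) (h : A *ᵥ w = l • w) : |l| ≤ ‖A‖ := by
  have h1 := norm_mulVec_sq_le A w
  have h2 : ∑ i, w i ^ 2 = 1 := by rw [← hw]; simp [dotProduct, sq]
  rw [h] at h1
  simp only [Pi.smul_apply, smul_eq_mul, mul_pow, ← Finset.mul_sum, h2, mul_one] at h1
  exact abs_le_of_sq_le_sq h1 (norm_nonneg _)

lemma integral_even_bound (C1 C2 a T : ℝ) (ha : 0 < a) (hT : 0 ≤ T) (hC1 : 0 ≤ C1) 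
    (f : ℝ → ℝ) (hf : ∀ t, ‖f t‖ ≤ C1 / (|t| + a) ^ 2 + C2 / (|t| + a)) :
    ∫ t in (-T)..T, f t ≤ 2 * (C1 / a + C2 * Real.log ((T + a) / a)) := by
  set g : ℝ → ℝ := fun t => C1 / (|t| + a) ^ 2 + C2 / (|t| + a) with hg
  have hpos : ∀ t : ℝ, |t| + a ≠ 0 := fun t => by positivity
  have hcont : Continuous g := by
    refine Continuous.add ?_ ?_
    · exact continuous_const.div (by fun_prop) fun t => pow_ne_zero _ (hpos t)
    · exact continuous_const.div (by fun_prop) hpos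
  have h1 : ‖∫ t in (-T)..T, f t‖ ≤ ∫ t in (-T)..T, g t :=
    intervalIntegral.norm_integral_le_of_norm_le (by linarith)
      (Filter.Eventually.of_forall fun t _ => hf t) (hcont.intervalIntegrable _ _)
  have h2 : ∫ t in (-T)..T, g t = 2 * ∫ t in (0:ℝ)..T, g t := by
    rw [← intervalIntegral.integral_add_adjacent_intervals (hcont.intervalIntegrable (-T) 0)
      (hcont.intervalIntegrable 0 T)]
    have : ∫ t in (-T)..0, g t = ∫ t in (0:ℝ)..T, g t := by
      have h := intervalIntegral.integral_comp_neg (a := 0) (b := T) g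
      rw [neg_zero] at h
      rw [← h]
      simp [hg]
    rw [this]; ring
  have h3 : ∫ t in (0:ℝ)..T, g t
      = (-C1 / (T + a) + C2 * Real.log (T + a)) - (-C1 / (0 + a) + C2 * Real.log (0 + a)) := by
    refine intervalIntegral.integral_eq_sub_of_hasDerivAt
      (f := fun t => -C1 / (t + a) + C2 * Real.log (t + a)) ?_ (hcont.intervalIntegrable _ _)
    intro t ht
    rw [Set.uIcc_of_le hT] at ht
    have hta : t + a ≠ 0 := by have := ht.1; positivity
    have d0 : HasDerivAt (fun t : ℝ => t + a) 1 t := (hasDerivAt_id t).add_const a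
    have d1 := (hasDerivAt_const t (-C1)).div d0 hta
    have d2 := (d0.log hta).const_mul C2
    refine (d1.add d2).congr_deriv ?_
    show _ = C1 / (|t| + a) ^ 2 + C2 / (|t| + a)
    rw [abs_of_nonneg ht.1]
    field_simp
    ring
  have h4 : Real.log ((T + a) / a) = Real.log (T + a) - Real.log a :=
    Real.log_div (by positivity) ha.ne'
  have h5 : 0 ≤ C1 / (T + a) := by positivity
  have h6 := (Real.le_norm_self _).trans h1
  rw [h2, h3] at h6
  rw [h4]
  refine h6.trans ?_
  rw [zero_add, neg_div, neg_div]
  nlinarith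

lemma integral_const_bound (c a b : ℝ) (hab : a ≤ b) (f : ℝ → ℝ) (hf : ∀ t, ‖f t‖ ≤ c) :
    ∫ t in a..b, f t ≤ c * (b - a) := by
  have := intervalIntegral.norm_integral_le_of_norm_le_const (a := a) (b := b) (f := f) (C := c)
    fun t _ => hf t
  rw [abs_of_nonneg (by linarith)] at this
  exact (Real.le_norm_self _).trans this

end helpers

set_option maxHeartbeats 2000000

/-- **Bound on `F₁`** (final estimate in Section 4 of the paper). Indices are
1-based; `σ₁ = ‖A‖`, `x₀ = λ_p − δ_p/2`, `x₁ = T = 2σ₁`. -/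
theorem F1_bound
    {n : ℕ} (A E : Matrix (Fin n) (Fin n) ℝ) (hA : A.IsSymm) (hE : E.IsSymm)
    (lam : ℕ → ℝ)
    (hlam_mono : ∀ i ∈ Finset.Icc 1 n, ∀ j ∈ Finset.Icc 1 n, i ≤ j → lam j ≤ lam i)
    (u : ℕ → (Fin n → ℝ))
    (hu_on : ∀ i ∈ Finset.Icc 1 n, ∀ j ∈ Finset.Icc 1 n,
      u i ⬝ᵥ u j = if i = j then 1 else 0)
    (hu_eig : ∀ i ∈ Finset.Icc 1 n, A *ᵥ u i = lam i • u i)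
    (p : ℕ) (hp1 : 1 ≤ p) (hpn : p < n)
    (r : ℕ) (hpr : p ≤ r) (hrn : r < n)
    (hr_half : |lam p| / 2 ≤ lam p - lam (r + 1))
    (x : ℝ)
    (hx : x = (Finset.Icc 1 r ×ˢ Finset.Icc 1 r).sup'
      (Finset.Nonempty.product (Finset.nonempty_Icc.mpr (le_trans hp1 hpr))
        (Finset.nonempty_Icc.mpr (le_trans hp1 hpr)))
      (fun q => |u q.1 ⬝ᵥ E *ᵥ u q.2|))
    (δp : ℝ) (hδp : δp = lam p - lam (p + 1))
    (hE_pos : 0 < specNorm E)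
    (hgap_lo : 4 * specNorm E ≤ δp) (hgap_hi : δp ≤ |lam p| / 4)
    (x₀ x₁ T : ℝ) (hx₀ : x₀ = lam p - δp / 2)
    (hx₁ : x₁ = 2 * specNorm A) (hT : T = 2 * specNorm A)
    (M1 M2 M3 M4 F1 : ℝ)
    (hM1 : M1 = ∫ t in (-T)..T, specNorm
      (res A (x₀ + t * Complex.I) * E.map Complex.ofReal
        * res A (x₀ + t * Complex.I)))
    (hM2 : M2 = ∫ x' in x₀..x₁, specNorm
      (res A (x' + T * Complex.I) * E.map Complex.ofReal
        * res A (x' + T * Complex.I)))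
    (hM3 : M3 = ∫ t in (-T)..T, specNorm
      (res A (x₁ + t * Complex.I) * E.map Complex.ofReal
        * res A (x₁ + t * Complex.I)))
    (hM4 : M4 = ∫ x' in x₀..x₁, specNorm
      (res A (x' - T * Complex.I) * E.map Complex.ofReal
        * res A (x' - T * Complex.I)))
    (hF1 : F1 = 1 / (2 * Real.pi) * (M1 + M2 + M3 + M4)) :
    F1 ≤ 12 * (specNorm E / |lam p| * Real.log (6 * specNorm A / δp)
      + (r : ℝ) ^ 2 * x / δp) := by
  classical
  set e := specNorm E with he
  set σ := specNorm A with hσ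
  set L := |lam p| with hL
  have hmem : ∀ i : Fin n, (i : ℕ) + 1 ∈ Finset.Icc 1 n := fun i => by
    have := i.2
    simp only [Finset.mem_Icc]; omega
  have hp_mem : p ∈ Finset.Icc 1 n := by simp only [Finset.mem_Icc]; omega
  have hp1_mem : p + 1 ∈ Finset.Icc 1 n := by simp only [Finset.mem_Icc]; omega
  have hr1_mem : r + 1 ∈ Finset.Icc 1 n := by simp only [Finset.mem_Icc]; omega
  have heigσ : ∀ i ∈ Finset.Icc 1 n, |lam i| ≤ σ := fun i hi =>
    abs_eig_le A (lam i) (u i) (by rw [hu_on i hi i hi]; simp) (hu_eig i hi)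
  have hLσ : L ≤ σ := heigσ p hp_mem
  have hδ : 0 < δp := by linarith
  have hLpos : 0 < L := by linarith
  have hσpos : 0 < σ := by linarith
  have hx0 : 0 ≤ x := by
    rw [hx]
    refine le_trans (abs_nonneg (u 1 ⬝ᵥ E *ᵥ u 1)) (Finset.le_sup'
      (fun q : ℕ × ℕ => |u q.1 ⬝ᵥ E *ᵥ u q.2|) (b := (1, 1)) ?_)
    simp only [Finset.mem_product, Finset.mem_Icc]; omega
  obtain ⟨G, hG, hGe, hR⟩ := res_facts A E (fun i => lam (i + 1)) (fun i => u (i + 1))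
    (fun i j => by
      rw [hu_on _ (hmem i) _ (hmem j)]
      simp [Fin.ext_iff]) (fun i => hu_eig _ (hmem i))
  have hGx : ∀ i j : Fin n, (i : ℕ) < r → (j : ℕ) < r → ‖G i j‖ ≤ x := by
    intro i j hi hj
    rw [hGe, hx]
    refine Finset.le_sup' (fun q : ℕ × ℕ => |u q.1 ⬝ᵥ E *ᵥ u q.2|)
      (b := ((i : ℕ) + 1, (j : ℕ) + 1)) ?_
    simp only [Finset.mem_product, Finset.mem_Icc]; omega
  -- general pointwise bounds
  have hpt : ∀ (z : ℂ) (m : ℝ), 0 < m → (∀ i : Fin n, m ≤ ‖z - (lam (i + 1) : ℝ)‖) →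
      ‖specNorm (res A z * E.map Complex.ofReal * res A z)‖ ≤ e / m ^ 2 := by
    intro z m hm hz
    have hz0 : ∀ i : Fin n, z - ((lam (i + 1) : ℝ) : ℂ) ≠ 0 := fun i h => by
      have := hz i
      rw [h, norm_zero] at this; linarith
    rw [norm_specNorm]
    refine (hR z hz0).trans ?_
    have nd := norm_diag_le (fun i : Fin n => (z - ((lam (i + 1) : ℝ) : ℂ))⁻¹) (m⁻¹)
      (by positivity) (fun i => by
        rw [norm_inv]
        exact inv_anti₀ hm (hz i))
    refine (norm_mul3_le _ _ _ nd hG nd).trans (le_of_eq ?_)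
    rw [← specNorm_eq, ← he]
    field_simp
  have hpt2 : ∀ (z : ℂ) (m m' : ℝ), 0 < m → 0 < m' →
      (∀ i : Fin n, m ≤ ‖z - (lam (i + 1) : ℝ)‖) →
      (∀ i : Fin n, r ≤ (i : ℕ) → m' ≤ ‖z - (lam (i + 1) : ℝ)‖) →
      ‖specNorm (res A z * E.map Complex.ofReal * res A z)‖
        ≤ (r : ℝ) ^ 2 * x * (m⁻¹) ^ 2 + 2 * e * m⁻¹ * m'⁻¹ := by
    intro z m m' hm hm' hz hz'
    have hz0 : ∀ i : Fin n, z - ((lam (i + 1) : ℝ) : ℂ) ≠ 0 := fun i h => by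
      have := hz i
      rw [h, norm_zero] at this; linarith
    rw [norm_specNorm]
    refine (hR z hz0).trans ?_
    refine norm_DGD_le G _ r x e _ _ hx0 (by positivity) (by positivity) hG hGx ?_ ?_
    · intro i
      rw [norm_inv]
      exact inv_anti₀ hm (hz i)
    · intro i hi
      rw [norm_inv]
      exact inv_anti₀ hm' (hz' i hi)
  have hT0 : 0 < T := by rw [hT]; linarith
  have hx0abs := abs_le.1 (heigσ p hp_mem)
  have hx1abs := abs_le.1 (heigσ (p + 1) hp1_mem)
  have hx01 : x₀ ≤ x₁ := by linarith
  have hx0σ : -σ ≤ x₀ := by linarith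
  have b2 : M2 ≤ e / T ^ 2 * (x₁ - x₀) := by
    rw [hM2]
    refine integral_const_bound _ _ _ hx01 _ fun t => hpt _ T hT0 fun i => ?_
    refine le_trans ?_ (Complex.abs_im_le_norm _)
    simp [le_abs_self]
  have b4 : M4 ≤ e / T ^ 2 * (x₁ - x₀) := by
    rw [hM4]
    refine integral_const_bound _ _ _ hx01 _ fun t => hpt _ T hT0 fun i => ?_
    refine le_trans ?_ (Complex.abs_im_le_norm _)
    simp [le_abs_self]
  have b3 : M3 ≤ e / σ ^ 2 * (T - -T) := by
    rw [hM3]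
    refine integral_const_bound _ _ _ (by linarith) _ fun t => hpt _ σ hσpos fun i => ?_
    refine le_trans ?_ (Complex.abs_re_le_norm _)
    have := (abs_le.1 (heigσ _ (hmem i))).2
    simp
    refine le_trans ?_ (le_abs_self _)
    linarith
  have b1 : M1 ≤ 2 * (4 * ((r : ℝ) ^ 2 * x) / (δp / 2)
      + 32 * e / (3 * L) * Real.log ((T + δp / 2) / (δp / 2))) := by
    rw [hM1]
    refine integral_even_bound _ _ _ _ (by linarith) hT0.le (by positivity) _ fun t => ?_
    have hta : 0 < |t| + δp / 2 := by positivity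
    have him : ∀ i : Fin n, |t| ≤ ‖(x₀ + t * Complex.I : ℂ) - (lam (i + 1) : ℝ)‖ := fun i => by
      refine le_trans ?_ (Complex.abs_im_le_norm _)
      simp
    have hre : ∀ i : Fin n, |x₀ - lam (i + 1)|
        ≤ ‖(x₀ + t * Complex.I : ℂ) - (lam (i + 1) : ℝ)‖ := fun i => by
      refine le_trans ?_ (Complex.abs_re_le_norm _)
      simp
    refine (hpt2 _ ((|t| + δp / 2) / 2) (3 * L / 8) (by positivity) (by positivity)
      ?_ ?_).trans (le_of_eq ?_)
    · intro i
      have h1 := him i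
      have h2 := hre i
      have h3 : δp / 2 ≤ |x₀ - lam (i + 1)| := by
        by_cases h : (i : ℕ) + 1 ≤ p
        · have := hlam_mono _ (hmem i) _ hp_mem h
          refine le_trans ?_ (neg_le_abs _)
          linarith
        · have := hlam_mono _ hp1_mem _ (hmem i) (by omega)
          refine le_trans ?_ (le_abs_self _)
          linarith
      linarith
    · intro i hi
      refine le_trans ?_ (hre i)
      have := hlam_mono _ hr1_mem _ (hmem i) (by omega)
      refine le_trans ?_ (le_abs_self _)
      linarith
    · field_simp
      ring
  set Λ := Real.log (6 * σ / δp) with hΛ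
  have hlog : Real.log ((T + δp / 2) / (δp / 2)) ≤ Λ := by
    refine Real.log_le_log (by positivity) ?_
    rw [div_le_div_iff₀ (by positivity) hδ, hT]
    nlinarith
  have hΛ1 : 1 ≤ Λ := by
    rw [hΛ, Real.le_log_iff_exp_le (by positivity)]
    refine Real.exp_one_lt_d9.le.trans ?_
    rw [le_div_iff₀ hδ]
    linarith
  set q := e / L with hq
  have hq0 : 0 < q := by positivity
  have hσq : e / σ ≤ q := div_le_div_of_nonneg_left hE_pos.le hLpos hLσ
  have c2 : e / T ^ 2 * (x₁ - x₀) ≤ 3 / 4 * q := by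
    calc e / T ^ 2 * (x₁ - x₀) ≤ e / T ^ 2 * (3 * σ) := by
          gcongr; linarith
      _ = 3 / 4 * (e / σ) := by rw [hT]; field_simp; norm_num
      _ ≤ _ := by linarith
  have c3 : e / σ ^ 2 * (T - -T) ≤ 4 * q := by
    calc e / σ ^ 2 * (T - -T) = 4 * (e / σ) := by rw [hT]; field_simp; norm_num
      _ ≤ _ := by linarith
  have c1 : M1 ≤ 16 * ((r : ℝ) ^ 2 * x / δp) + 64 / 3 * (q * Λ) := by
    refine b1.trans ?_
    have h1 : 32 * e / (3 * L) * Real.log ((T + δp / 2) / (δp / 2)) ≤ 32 * e / (3 * L) * Λ := by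
      gcongr
    have h2 : 32 * e / (3 * L) = 32 / 3 * q := by rw [hq]; field_simp
    have h3 : 4 * ((r : ℝ) ^ 2 * x) / (δp / 2) = 8 * ((r : ℝ) ^ 2 * x / δp) := by
      field_simp; ring
    rw [h3]
    rw [h2] at h1 ⊢
    linarith
  set y := (r : ℝ) ^ 2 * x / δp with hy
  have hy0 : 0 ≤ y := by positivity
  have hqΛ : q ≤ q * Λ := le_mul_of_one_le_right hq0.le hΛ1
  have hsum : M1 + M2 + M3 + M4 ≤ 16 * y + 27 * (q * Λ) := by linarith
  have hpi := Real.pi_gt_three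
  rw [hF1, one_div, inv_mul_le_iff₀ (by positivity)]
  have h0 : 0 ≤ 12 * (q * Λ + y) := by positivity
  nlinarith
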